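/- Let S ⊆ V be nonempty and let T* ⊆ V ∖ S be a nonempty set such that Δ_S(T*) > RQ(S) and Δ_S(T*) ≥ Δ_S(T) for every nonempty T ⊆ V ∖ S. Then for every subset V' ⊆ V ∖ (S ∪ T*), adding T* strictly increases the Rayleigh quotient: RQ(S ∪ V' ∪ T*) > RQ(S ∪ V'). -/

import Mathlib

open scoped Classical

/-- The value `(x p - x q)^2` of an unordered pair/edge. -/
noncomputable def edgeVal {V : Type*} (x : V → ℝ) : Sym2 V → ℝ :=
  Sym2.lift ⟨fun p q => (x p - x q) ^ 2, fun p q => by ring⟩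

/-- Rayleigh quotient of the subgraph induced on `S`:
numerator sums `(x p - x q)^2` over unordered edges of `G` with both endpoints in `S`. -/
noncomputable def RQ {V : Type*} [Fintype V] [DecidableEq V]
    (G : SimpleGraph V) (x : V → ℝ) (S : Finset V) : ℝ :=
  (∑ e ∈ G.edgeFinset.filter (fun e => ∀ v ∈ e, v ∈ S), edgeVal x e) /
    (∑ p ∈ S, x p ^ 2)

/-- Increment of a single node `v` relative to `S`. -/
noncomputable def deltaNode {V : Type*} [Fintype V] [DecidableEq V]
    (G : SimpleGraph V) (x : V → ℝ) (S : Finset V) (v : V) : ℝ :=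
  (∑ r ∈ S.filter (fun r => G.Adj v r), (x v - x r) ^ 2) / (x v) ^ 2

/-- Increment of a nodeset `T` (disjoint from `S`) relative to `S`:
cross edges between `T` and `S` plus edges internal to `T`, over the mass of `T`. -/
noncomputable def deltaSet {V : Type*} [Fintype V] [DecidableEq V]
    (G : SimpleGraph V) (x : V → ℝ) (S T : Finset V) : ℝ :=
  ((∑ v ∈ T, ∑ r ∈ S.filter (fun r => G.Adj v r), (x v - x r) ^ 2) +
      ∑ e ∈ G.edgeFinset.filter (fun e => ∀ w ∈ e, w ∈ T), edgeVal x e) /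
    (∑ v ∈ T, x v ^ 2)

/-!
`RQ (S ∪ T)` is the mean of `RQ S` and `Δ_S(T)` weighted by the masses of `S` and `T`. With
`T = V'`, this keeps `RQ (S ∪ V')` below `Δ_S(T*)`, which exceeds `RQ S` and is at least `Δ_S(V')`.
Enlarging `S` to `S ∪ V'` only adds cross edges, so `RQ (S ∪ V') < Δ_S(T*) ≤ Δ_{S ∪ V'}(T*)`;
averaging `RQ (S ∪ V')` with the latter increment therefore raises it.
-/

section Sym2

variable {α : Type*} {s t : Finset α}

theorem disjoint_sym2 (hst : Disjoint s t) : Disjoint s.sym2 t.sym2 := by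
  rw [Finset.disjoint_left]
  rintro ⟨a, b⟩ hs ht
  exact Finset.disjoint_left.mp hst (Finset.mk_mem_sym2_iff.mp hs).1
    (Finset.mk_mem_sym2_iff.mp ht).1

theorem injOn_sym2Mk_prod {A B : Set α} (hAB : Disjoint A B) :
    Set.InjOn Sym2.mk.uncurry (A ×ˢ B) := by
  rintro ⟨a, b⟩ hab ⟨c, d⟩ hcd h
  obtain ⟨rfl, rfl⟩ | ⟨rfl, rfl⟩ := Sym2.eq_iff.mp h
  · rfl
  · exact (Set.disjoint_left.mp hAB hab.1 hcd.2).elim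

variable [DecidableEq α]

theorem sym2_union (s t : Finset α) :
    (s ∪ t).sym2 = s.sym2 ∪ ((t ×ˢ s).image Sym2.mk.uncurry ∪ t.sym2) := by
  ext e
  induction e with | _ a b
  simp only [Finset.mk_mem_sym2_iff, Finset.mem_union, Finset.mem_image, Finset.mem_product,
    Prod.exists, Function.uncurry_apply_pair, Sym2.eq_iff]
  grind

theorem disjoint_sym2_image_product (hst : Disjoint s t) :
    Disjoint s.sym2 ((t ×ˢ s).image Sym2.mk.uncurry) := by
  rw [Finset.disjoint_right, Finset.forall_mem_image]
  rintro ⟨a, b⟩ hab hs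
  exact Finset.disjoint_left.mp hst (Finset.mk_mem_sym2_iff.mp hs).1 (Finset.mem_product.mp hab).1

theorem disjoint_image_product_sym2 (hst : Disjoint s t) :
    Disjoint ((t ×ˢ s).image Sym2.mk.uncurry) t.sym2 := by
  rw [Finset.disjoint_left, Finset.forall_mem_image]
  rintro ⟨a, b⟩ hab ht
  exact Finset.disjoint_left.mp hst (Finset.mem_product.mp hab).2 (Finset.mk_mem_sym2_iff.mp ht).2

theorem sum_sym2_union {M : Type*} [AddCommMonoid M] (f : Sym2 α → M) (hst : Disjoint s t) :
    ∑ e ∈ (s ∪ t).sym2, f e =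
      ∑ e ∈ s.sym2, f e + (∑ a ∈ t, ∑ b ∈ s, f s(a, b) + ∑ e ∈ t.sym2, f e) := by
  have hs : Disjoint s.sym2 ((t ×ˢ s).image Sym2.mk.uncurry ∪ t.sym2) :=
    Finset.disjoint_union_right.mpr ⟨disjoint_sym2_image_product hst, disjoint_sym2 hst⟩
  have hinj : Set.InjOn Sym2.mk.uncurry (t ×ˢ s : Set (α × α)) :=
    injOn_sym2Mk_prod (Finset.disjoint_coe.mpr hst.symm)
  rw [sym2_union, Finset.sum_union hs, Finset.sum_union (disjoint_image_product_sym2 hst),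
    Finset.sum_image (Finset.coe_product t s ▸ hinj), Finset.sum_product]
  rfl

end Sym2

section Mass

variable {V : Type*} {x : V → ℝ} {S T : Finset V}

/-- The mass `∑ p ∈ S, x p ^ 2` of a nodeset, the denominator of both `RQ` and `deltaSet`. -/
noncomputable def mass (x : V → ℝ) (S : Finset V) : ℝ :=
  ∑ p ∈ S, x p ^ 2

theorem mass_union [DecidableEq V] (hST : Disjoint S T) :
    mass x (S ∪ T) = mass x S + mass x T :=
  Finset.sum_union hST

theorem mass_nonneg : 0 ≤ mass x S :=
  Finset.sum_nonneg fun p _ => sq_nonneg (x p)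

theorem mass_pos (hx : ∀ p ∈ S, x p ≠ 0) (hS : S.Nonempty) : 0 < mass x S :=
  Finset.sum_pos (fun p hp => sq_pos_of_ne_zero (hx p hp)) hS

end Mass

section Energy

variable {V : Type*} {G : SimpleGraph V} {x : V → ℝ} {S S' T : Finset V}

/-- The energy of the edges between `T` and `S`, the first summand in the numerator of `deltaSet`.
An edge with both endpoints in `S ∩ T` is counted twice. -/
noncomputable def crossEnergy (G : SimpleGraph V) (x : V → ℝ) (S T : Finset V) : ℝ :=
  ∑ v ∈ T, ∑ r ∈ S.filter (fun r => G.Adj v r), (x v - x r) ^ 2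

theorem crossEnergy_eq_sum_sum :
    crossEnergy G x S T =
      ∑ v ∈ T, ∑ r ∈ S, if s(v, r) ∈ G.edgeSet then edgeVal x s(v, r) else 0 := by
  simp only [crossEnergy, Finset.sum_filter]
  rfl

theorem crossEnergy_mono_left (hS : S ⊆ S') : crossEnergy G x S T ≤ crossEnergy G x S' T :=
  Finset.sum_le_sum fun v _ =>
    Finset.sum_le_sum_of_subset_of_nonneg (Finset.filter_subset_filter _ hS)
      fun r _ _ => sq_nonneg (x v - x r)

variable [Fintype V] [DecidableEq V]

/-- The energy of the subgraph induced on `S`, the numerator of `RQ`. -/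
noncomputable def edgeEnergy (G : SimpleGraph V) (x : V → ℝ) (S : Finset V) : ℝ :=
  ∑ e ∈ G.edgeFinset.filter (fun e => ∀ v ∈ e, v ∈ S), edgeVal x e

theorem RQ_eq_edgeEnergy_div_mass : RQ G x S = edgeEnergy G x S / mass x S := rfl

theorem deltaSet_eq_energy_div_mass :
    deltaSet G x S T = (crossEnergy G x S T + edgeEnergy G x T) / mass x T := rfl

theorem edgeEnergy_eq_sum_sym2 :
    edgeEnergy G x S = ∑ e ∈ S.sym2, if e ∈ G.edgeSet then edgeVal x e else 0 := by
  rw [edgeEnergy, ← Finset.sum_filter]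
  congr 1
  ext e
  simp only [Finset.mem_filter, SimpleGraph.mem_edgeFinset, Finset.mem_sym2_iff, and_comm]

theorem edgeEnergy_union (hST : Disjoint S T) :
    edgeEnergy G x (S ∪ T) = edgeEnergy G x S + (crossEnergy G x S T + edgeEnergy G x T) := by
  simp only [edgeEnergy_eq_sum_sym2, crossEnergy_eq_sum_sum, sum_sym2_union _ hST]

theorem deltaSet_mono_left (hS : S ⊆ S') : deltaSet G x S T ≤ deltaSet G x S' T := by
  rw [deltaSet_eq_energy_div_mass, deltaSet_eq_energy_div_mass]
  gcongr
  · exact mass_nonneg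
  · exact crossEnergy_mono_left hS

end Energy

section WeightedMean

variable {V : Type*} [Fintype V] [DecidableEq V] {G : SimpleGraph V} {x : V → ℝ}
  {S T : Finset V} {c : ℝ}

theorem RQ_union (hST : Disjoint S T) (hS : mass x S ≠ 0) (hT : mass x T ≠ 0) :
    RQ G x (S ∪ T) =
      (RQ G x S * mass x S + deltaSet G x S T * mass x T) / (mass x S + mass x T) := by
  rw [RQ_eq_edgeEnergy_div_mass, edgeEnergy_union hST, mass_union hST, RQ_eq_edgeEnergy_div_mass,
    deltaSet_eq_energy_div_mass, div_mul_cancel₀ _ hS, div_mul_cancel₀ _ hT]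

theorem RQ_union_lt (hST : Disjoint S T) (hS : 0 < mass x S) (hT : 0 < mass x T)
    (hRQ : RQ G x S < c) (hΔ : deltaSet G x S T ≤ c) : RQ G x (S ∪ T) < c := by
  rw [RQ_union hST hS.ne' hT.ne', div_lt_iff₀ (add_pos hS hT), mul_add]
  exact add_lt_add_of_lt_of_le (mul_lt_mul_of_pos_right hRQ hS)
    (mul_le_mul_of_nonneg_right hΔ hT.le)

theorem RQ_lt_RQ_union (hST : Disjoint S T) (hS : 0 < mass x S) (hT : 0 < mass x T)
    (hΔ : RQ G x S < deltaSet G x S T) : RQ G x S < RQ G x (S ∪ T) := by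
  rw [RQ_union hST hS.ne' hT.ne', lt_div_iff₀ (add_pos hS hT), mul_add]
  gcongr

end WeightedMean

/-- **Core of the proof of Theorem 2.** If `T*` is a nonempty set disjoint from `S` with
`Δ_S(T*) > RQ(S)` and `Δ_S(T*)` maximal among all nonempty sets disjoint from `S`, then
adding `T*` strictly increases the Rayleigh quotient of every extension `S ∪ V'` of `S`
disjoint from `T*`. -/
theorem deltaMax_improves_extension {V : Type*} [Fintype V] [DecidableEq V]
    (G : SimpleGraph V) (x : V → ℝ) (hx : ∀ v, x v ≠ 0)
    (S : Finset V) (hS : S.Nonempty)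
    (Tstar : Finset V) (hTstar : Tstar.Nonempty) (hTdisj : Disjoint Tstar S)
    (hgt : deltaSet G x S Tstar > RQ G x S)
    (hmax : ∀ T : Finset V, T.Nonempty → Disjoint T S →
      deltaSet G x S Tstar ≥ deltaSet G x S T) :
    ∀ V' : Finset V, Disjoint V' S → Disjoint V' Tstar →
      RQ G x (S ∪ V' ∪ Tstar) > RQ G x (S ∪ V') := by
  intro V' hV'S hV'T
  have hmass {A : Finset V} (hA : A.Nonempty) : 0 < mass x A := mass_pos (fun v _ => hx v) hA
  have hlt : RQ G x (S ∪ V') < deltaSet G x S Tstar := by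
    obtain rfl | hV' := V'.eq_empty_or_nonempty
    · rwa [Finset.union_empty]
    · exact RQ_union_lt hV'S.symm (hmass hS) (hmass hV') hgt (hmax V' hV' hV'S)
  have hdisj : Disjoint (S ∪ V') Tstar := Finset.disjoint_union_left.mpr ⟨hTdisj.symm, hV'T⟩
  have hSV' : 0 < mass x (S ∪ V') := hmass (hS.mono Finset.subset_union_left)
  exact RQ_lt_RQ_union hdisj hSV' (hmass hTstar)
    (hlt.trans_le (deltaSet_mono_left Finset.subset_union_left))
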